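/- Let n ≥ 3 be an odd integer. The zero set of Ψ_n in ℝ² is the union of the diagonal D = {(x,x) : x ∈ ℝ} and of (n−1)/2 pairwise disjoint simple closed curves C_1, …, C_{(n−1)/2} (each C_m is a subset of ℝ² homeomorphic to the circle S¹). Moreover, the union of these curves intersects the diagonal D exactly at the (n−1) points (t_{n−1,i}, t_{n−1,i}), 1 ≤ i ≤ n−1, and intersects the anti-diagonal {(x,−x) : x ∈ ℝ} exactly at the (n−1) points (t_{n,i}, −t_{n,i}) with t_{n,i} ≠ 0. -/

import Mathlib

open Polynomial Real Set

/-- Physicists' Hermite polynomials: `H 0 = 1`, `H 1 = 2X`,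
`H (n+2) = 2X * H (n+1) - 2(n+1) * H n`. -/
noncomputable def hermiteH : ℕ → Polynomial ℝ
  | 0 => 1
  | 1 => Polynomial.C 2 * Polynomial.X
  | (n + 2) => Polynomial.C 2 * Polynomial.X * hermiteH (n + 1)
      - Polynomial.C ((2 * (n + 1) : ℕ) : ℝ) * hermiteH n

/-- `z : Fin m → ℝ` enumerates the zeros of `P` in increasing order. -/
def IsZeroEnum (P : Polynomial ℝ) (m : ℕ) (z : Fin m → ℝ) : Prop :=
  StrictMono z ∧ (∀ i, P.eval (z i) = 0) ∧ (∀ x : ℝ, P.eval x = 0 → ∃ i, x = z i)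

/-- The eigenfunction `Φ_n^θ`. -/
noncomputable def Phi (n : ℕ) (θ : ℝ) (p : ℝ × ℝ) : ℝ :=
  (Real.cos θ * (hermiteH n).eval p.1 + Real.sin θ * (hermiteH n).eval p.2) *
    Real.exp (-(p.1 ^ 2 + p.2 ^ 2) / 2)

/-- A critical zero of `u` : a common zero of `u` and its differential. -/
def IsCriticalZero (u : ℝ × ℝ → ℝ) (p : ℝ × ℝ) : Prop :=
  u p = 0 ∧ fderiv ℝ u p = 0

/-- Nodal set of `u`. -/
def nodalSet (u : ℝ × ℝ → ℝ) : Set (ℝ × ℝ) := {p | u p = 0}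

/-- The set of nodal domains of `u`, i.e. of connected components of the
complement of the nodal set. -/
def nodalDomains (u : ℝ × ℝ → ℝ) : Set (Set (ℝ × ℝ)) :=
  {C | ∃ p, u p ≠ 0 ∧ C = connectedComponentIn {q | u q ≠ 0} p}

/-- `Ψ_n(x,y) = H_n(x) - H_n(y)`. -/
noncomputable def Psi (n : ℕ) (p : ℝ × ℝ) : ℝ :=
  (hermiteH n).eval p.1 - (hermiteH n).eval p.2

lemma derivative_hermiteH_succ (n : ℕ) :
    derivative (hermiteH (n + 1)) = C (2 * (n + 1) : ℝ) * hermiteH n := by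
  induction n using Nat.twoStepInduction with
  | zero => simp [hermiteH]
  | one => simp [hermiteH]; ring_nf
  | more n ih1 ih2 =>
    rw [hermiteH, derivative_sub, derivative_mul, derivative_mul, derivative_mul, ih1, ih2]
    simp only [derivative_C, derivative_X]
    rw [show hermiteH (n + 2) = C 2 * X * hermiteH (n + 1)
      - C ((2 * (n + 1) : ℕ) : ℝ) * hermiteH n from rfl]
    push_cast
    simp only [map_mul, map_add, map_one, map_natCast, map_ofNat]
    ring

/-- Hermite's equation. -/
lemma derivative_derivative_hermiteH (n : ℕ) :
    derivative (derivative (hermiteH (n + 1))) =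
      C 2 * X * derivative (hermiteH (n + 1)) - C (2 * (n + 1) : ℝ) * hermiteH (n + 1) := by
  have h := derivative_hermiteH_succ (n + 1)
  rw [show hermiteH (n + 1 + 1) = C 2 * X * hermiteH (n + 1)
      - C ((2 * (n + 1) : ℕ) : ℝ) * hermiteH n from rfl,
    show C ((2 * (n + 1) : ℕ) : ℝ) * hermiteH n = derivative (hermiteH (n + 1)) by
      rw [derivative_hermiteH_succ]; push_cast; rfl,
    derivative_sub, derivative_mul, derivative_mul] at h
  simp only [derivative_C, derivative_X] at h
  push_cast at h
  simp only [map_mul, map_add, map_one, map_natCast, map_ofNat] at h ⊢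
  linear_combination -h

lemma eval_neg_hermiteH (n : ℕ) (x : ℝ) :
    (hermiteH n).eval (-x) = (-1) ^ n * (hermiteH n).eval x := by
  induction n using Nat.twoStepInduction with
  | zero => simp [hermiteH]
  | one => simp [hermiteH]
  | more n ih1 ih2 =>
    simp only [hermiteH, eval_sub, eval_mul, eval_C, eval_X, ih1, ih2]
    ring

lemma natDegree_hermiteH_le (n : ℕ) : (hermiteH n).natDegree ≤ n := by
  induction n using Nat.twoStepInduction with
  | zero => simp [hermiteH]
  | one => simp [hermiteH]
  | more n ih1 ih2 =>
    rw [hermiteH]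
    refine (natDegree_sub_le _ _).trans (max_le ?_ ?_)
    · rw [mul_assoc]
      refine (natDegree_C_mul_le _ _).trans (natDegree_mul_le.trans ?_)
      have := natDegree_X_le (R := ℝ)
      omega
    · exact (natDegree_C_mul_le _ _).trans (by omega)

lemma coeff_hermiteH_self (n : ℕ) : (hermiteH n).coeff n = 2 ^ n := by
  induction n using Nat.twoStepInduction with
  | zero => simp [hermiteH]
  | one => simp [hermiteH]
  | more n ih1 ih2 =>
    have h : (hermiteH n).coeff (n + 2) = 0 :=
      coeff_eq_zero_of_natDegree_lt ((natDegree_hermiteH_le n).trans_lt (by omega))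
    rw [hermiteH, coeff_sub, mul_assoc, coeff_C_mul, coeff_X_mul, coeff_C_mul, h, ih2]
    ring

lemma tendsto_hermiteH_atTop {n : ℕ} (hn : 0 < n) :
    Filter.Tendsto (fun x => (hermiteH n).eval x) Filter.atTop Filter.atTop := by
  have hc := coeff_hermiteH_self n
  have hd : (hermiteH n).natDegree = n :=
    le_antisymm (natDegree_hermiteH_le n) (le_natDegree_of_ne_zero (by rw [hc]; positivity))
  apply tendsto_atTop_of_leadingCoeff_nonneg
  · exact natDegree_pos_iff_degree_pos.mp (by omega)
  · rw [leadingCoeff, hd, hc]; positivity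

lemma hermiteH_ne_zero (n : ℕ) : hermiteH n ≠ 0 := by
  intro h
  have := coeff_hermiteH_self n
  rw [h, coeff_zero] at this
  exact absurd this.symm (by positivity)

/-- The extremal values of `|H_n|` grow with the distance of the critical point to the origin. -/
lemma abs_eval_lt_of_derivative_eq_zero (n : ℕ) {y t : ℝ} (hy : |y| < t)
    (ht : (derivative (hermiteH (n + 1))).eval t = 0) :
    |(hermiteH (n + 1)).eval y| < |(hermiteH (n + 1)).eval t| := by
  set f := hermiteH (n + 1) with hf
  set F : ℝ[X] := C (2 * (n + 1) : ℝ) * f ^ 2 + derivative f ^ 2 with hF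
  have hF' : derivative F = C 4 * X * derivative f ^ 2 := by
    have h := derivative_derivative_hermiteH n
    rw [← hf] at h
    rw [hF, derivative_add, derivative_mul, derivative_pow, derivative_pow, h]
    simp only [map_mul, map_add, map_one, map_natCast, map_ofNat, Nat.cast_ofNat,
      derivative_mul, derivative_ofNat, derivative_natCast, derivative_one]
    ring
  have hmono : MonotoneOn (fun x => F.eval x) (Ici 0) := by
    apply monotoneOn_of_deriv_nonneg (convex_Ici 0) F.continuousOn F.differentiable.differentiableOn
    intro x hx
    rw [interior_Ici] at hx
    have hx : 0 < x := hx
    rw [Polynomial.deriv, hF']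
    simp only [eval_mul, eval_pow, eval_C, eval_X]
    positivity
  have habs : |f.eval y| = |f.eval (|y|)| := by
    rcases abs_choice y with h | h <;> rw [h]
    rw [hf, eval_neg_hermiteH, abs_mul, abs_pow, abs_neg, abs_one, one_pow, one_mul]
  have hlt : F.eval |y| < F.eval t := by
    have hle := hmono (abs_nonneg y) ((abs_nonneg y).trans hy.le) hy.le
    refine lt_of_le_of_ne hle fun heq => ?_
    have hconst : F = C (F.eval t) := by
      apply eq_of_infinite_eval_eq
      refine (Icc_infinite hy).mono fun x hx => ?_
      have h0 : 0 ≤ x := (abs_nonneg y).trans hx.1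
      have h1 := hmono (abs_nonneg y) h0 hx.1
      have h2 := hmono h0 (h0.trans hx.2) hx.2
      simp only [mem_ofPred_eq, eval_C] at *
      linarith
    have h0 : derivative F = 0 := by rw [hconst, derivative_C]
    rw [hF', hf, derivative_hermiteH_succ] at h0
    have hn : (2 * (n + 1) : ℝ) ≠ 0 := by positivity
    simp [hermiteH_ne_zero] at h0
    exact absurd h0 (by exact_mod_cast n.succ_ne_zero)
  rw [habs]
  apply sq_lt_sq.mp
  simp only [hF, eval_add, eval_mul, eval_pow, eval_C, ht] at hlt
  have hn : (0 : ℝ) < 2 * (n + 1) := by positivity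
  nlinarith [sq_nonneg ((derivative f).eval |y|)]

/-- The mean value theorem for `exp (-x ^ 2) * H_{n+1}'(x)`, whose derivative is
`-2 (n + 1) exp (-x ^ 2) * H_{n+1}(x)`. -/
lemma exists_eval_eq_neg_mul (n : ℕ) {a b : ℝ} (hab : a < b)
    (ha : (derivative (hermiteH (n + 1))).eval a = 0) :
    ∃ c ∈ Ioo a b, ∃ r > 0, (hermiteH (n + 1)).eval c =
      -r * (derivative (hermiteH (n + 1))).eval b := by
  set f := hermiteH (n + 1) with hf
  have hg : ∀ x, HasDerivAt (fun x => exp (-x ^ 2) * (derivative f).eval x)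
      (-(2 * (n + 1)) * exp (-x ^ 2) * f.eval x) x := by
    intro x
    have h1 : HasDerivAt (fun x : ℝ => exp (-x ^ 2)) (exp (-x ^ 2) * -(2 * x)) x := by
      simpa using ((hasDerivAt_pow 2 x).neg).exp
    refine (h1.mul ((derivative f).hasDerivAt x)).congr_deriv ?_
    rw [hf, derivative_derivative_hermiteH]
    simp only [eval_sub, eval_mul, eval_C, eval_X]
    ring
  obtain ⟨c, hc, hslope⟩ := exists_hasDerivAt_eq_slope _ _ hab
    (fun x _ => (hg x).continuousAt.continuousWithinAt) fun x _ => hg x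
  refine ⟨c, hc, exp (-b ^ 2) / ((b - a) * (2 * (n + 1)) * exp (-c ^ 2)), ?_, ?_⟩
  · have := sub_pos.mpr hab
    positivity
  · have := (sub_pos.mpr hab).ne'
    have hn : (n + 1 : ℝ) ≠ 0 := by positivity
    rw [ha, mul_zero, sub_zero, eq_div_iff this] at hslope
    field_simp
    linear_combination -hslope

/-- The levels `u 0 < ⋯ < u k` separate the positive zeros of `x ↦ f x - f (s x)` for every
slope `s ∈ [-1, 1)`. -/
structure IsBarrier (f : ℝ[X]) (k : ℕ) (u : ℕ → ℝ) : Prop where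
  strictMono : StrictMono u
  pos : ∀ j, 0 < u j
  natDegree_le : f.natDegree ≤ 2 * k + 1
  odd : ∀ x, f.eval (-x) = -f.eval x
  abs_lt : ∀ j ≤ k, ∀ y, |y| < u j → |f.eval y| < |f.eval (u j)|
  alternating : ∀ j < k, f.eval (u j) * f.eval (u (j + 1)) < 0
  injOn : ∀ j < k, InjOn (fun x => f.eval x) (Icc (u j) (u (j + 1)))

/-- The part of `{f x = f y}` in the square annulus `u j ≤ max |x| |y| ≤ u (j + 1)`, without
the diagonal points at sup-norm more than `u j`. -/
def oval (f : ℝ[X]) (u : ℕ → ℝ) (j : ℕ) : Set (ℝ × ℝ) :=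
  {p | f.eval p.1 = f.eval p.2 ∧ ‖p‖ ∈ Icc (u j) (u (j + 1)) ∧ |p.1 + p.2| ≤ ‖p‖ + u j}

/-- A nonzero odd function given by a polynomial of degree at most `2 k + 1` has at most `k`
positive zeros. -/
lemma exists_eq_of_odd_of_natDegree_le {Q : ℝ[X]} (hQ : Q ≠ 0) {k : ℕ}
    (hdeg : Q.natDegree ≤ 2 * k + 1) (hodd : ∀ x, Q.eval (-x) = -Q.eval x) {x : ℕ → ℝ}
    (hx : ∀ j < k, 0 < x j ∧ Q.eval (x j) = 0) (hinj : InjOn x (Iio k)) {y : ℝ} (hy : 0 < y)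
    (hQy : Q.eval y = 0) : ∃ j < k, y = x j := by
  by_contra! hne
  classical
  set S : Finset ℝ := insert y ((Finset.range k).image x) with hS
  have hScard : S.card = k + 1 := by
    rw [hS, Finset.card_insert_of_notMem, Finset.card_image_of_injOn, Finset.card_range]
    · simpa using hinj
    · simp only [Finset.mem_image, Finset.mem_range, not_exists, not_and]
      exact fun j hj h => hne j hj h.symm
  have hSpos : ∀ z ∈ S, 0 < z ∧ Q.eval z = 0 := by
    intro z hz
    simp only [hS, Finset.mem_insert, Finset.mem_image, Finset.mem_range] at hz
    rcases hz with rfl | ⟨j, hj, rfl⟩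
    exacts [⟨hy, hQy⟩, hx j hj]
  have hdisj : Disjoint S (S.image Neg.neg) := by
    rw [Finset.disjoint_left]
    intro z hz hz'
    obtain ⟨w, hw, rfl⟩ := Finset.mem_image.mp hz'
    linarith [(hSpos _ hz).1, (hSpos _ hw).1]
  have hsub : S ∪ S.image Neg.neg ⊆ Q.roots.toFinset := by
    intro z hz
    rw [Multiset.mem_toFinset, mem_roots hQ, IsRoot]
    rcases Finset.mem_union.mp hz with hz | hz
    · exact (hSpos z hz).2
    · obtain ⟨w, hw, rfl⟩ := Finset.mem_image.mp hz
      rw [hodd, (hSpos w hw).2, neg_zero]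
  have hcard := Finset.card_le_card hsub
  rw [Finset.card_union_of_disjoint hdisj, Finset.card_image_of_injective _ neg_injective,
    hScard] at hcard
  have h1 := Multiset.toFinset_card_le Q.roots
  have h2 := card_roots' Q
  omega

namespace IsBarrier

variable {f : ℝ[X]} {k : ℕ} {u : ℕ → ℝ}

/-- Along a direction of slope `s ∈ [-1, 1)` there is exactly one zero between consecutive
levels, and there are no other ones. -/
lemma exists_ray_zeros (h : IsBarrier f k u) (hk : 0 < k) {s : ℝ} (hs : -1 ≤ s) (hs' : s < 1) :
    ∃ x : ℕ → ℝ, (∀ j < k, x j ∈ Ioo (u j) (u (j + 1)) ∧ f.eval (x j) = f.eval (s * x j)) ∧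
      ∀ y > 0, f.eval y = f.eval (s * y) → ∃ j < k, y = x j := by
  set Q : ℝ[X] := f - f.comp (C s * X) with hQ
  have hev : ∀ x, Q.eval x = f.eval x - f.eval (s * x) := by simp [hQ]
  have hsign : ∀ j ≤ k, 0 < Q.eval (u j) * f.eval (u j) := by
    intro j hj
    rw [hev]
    have hu := h.pos j
    rcases hs.eq_or_lt with rfl | hs
    · have h0 := h.abs_lt j hj 0 (by simpa using hu)
      have : f.eval (u j) ≠ 0 := abs_pos.mp ((abs_nonneg _).trans_lt h0)
      rw [neg_one_mul, h.odd]
      have := sq_pos_of_ne_zero this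
      nlinarith
    · have h0 := h.abs_lt j hj (s * u j) (by
        rw [abs_mul, abs_of_pos hu]
        nlinarith [_root_.abs_lt.mpr ⟨hs, hs'⟩])
      have h1 := abs_mul_abs_self (f.eval (u j))
      have h2 := le_abs_self (f.eval (s * u j) * f.eval (u j))
      rw [abs_mul] at h2
      nlinarith [abs_nonneg (f.eval (s * u j))]
  have hroot : ∀ j, ∃ x, j < k → x ∈ Ioo (u j) (u (j + 1)) ∧ Q.eval x = 0 := by
    intro j
    by_cases hj : j < k
    · have hlt := h.strictMono j.lt_succ_self
      have h1 := hsign j hj.le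
      have h2 := hsign (j + 1) hj
      have h3 := h.alternating j hj
      have hneg : Q.eval (u j) * Q.eval (u (j + 1)) < 0 := by
        by_contra! hcon
        nlinarith [mul_pos h1 h2, mul_nonneg hcon (neg_nonneg.mpr h3.le)]
      have hc : ContinuousOn (fun x => Q.eval x) (Icc (u j) (u (j + 1))) := Q.continuousOn
      rcases mul_neg_iff.mp hneg with ⟨ha, hb⟩ | ⟨ha, hb⟩
      · obtain ⟨x, hx, hx'⟩ := intermediate_value_Ioo' hlt.le hc ⟨hb, ha⟩
        exact ⟨x, fun _ => ⟨hx, hx'⟩⟩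
      · obtain ⟨x, hx, hx'⟩ := intermediate_value_Ioo hlt.le hc ⟨ha, hb⟩
        exact ⟨x, fun _ => ⟨hx, hx'⟩⟩
    · exact ⟨0, fun hj' => absurd hj' hj⟩
  choose x hx using hroot
  refine ⟨x, fun j hj => ⟨(hx j hj).1, ?_⟩, fun y hy hfy => ?_⟩
  · exact sub_eq_zero.mp (hev _ ▸ (hx j hj).2)
  · have hQ0 : Q ≠ 0 := by
      intro h0
      have := hsign 0 hk.le
      simp [h0] at this
    have hmono : StrictMonoOn x (Iio k) := by
      intro i hi j hj hij
      exact ((hx i hi).1.2.trans_le (h.strictMono.monotone hij)).trans (hx j hj).1.1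
    refine exists_eq_of_odd_of_natDegree_le hQ0 ?_ (fun z => ?_)
      (fun j hj => ⟨(h.pos j).trans (hx j hj).1.1, (hx j hj).2⟩) hmono.injOn hy ?_
    · refine (natDegree_sub_le _ _).trans (max_le h.natDegree_le ?_)
      refine natDegree_comp_le.trans ((Nat.mul_le_mul h.natDegree_le ?_).trans (mul_one _).le)
      exact (natDegree_C_mul_le _ _).trans natDegree_X_le
    · rw [hev, hev, mul_neg, h.odd, h.odd]; ring
    · rw [hev, hfy, sub_self]

end IsBarrier

lemma norm_mk_mul {c s : ℝ} (hc : 0 < c) (hs : s ∈ Icc (-1) 1) : ‖(c, s * c)‖ = c := by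
  rw [Prod.norm_mk, norm_mul, Real.norm_of_nonneg hc.le, max_eq_left]
  exact mul_le_of_le_one_left hc.le (abs_le.mpr hs)

/-- Up to the symmetries of the square, a nonzero point of the plane has the form `(c, s * c)`
with `0 < c` and `|s| ≤ 1`. -/
lemma forall_ne_zero_of_symm {P : ℝ × ℝ → Prop} (neg : ∀ p, P (-p) → P p)
    (swap : ∀ p, P p.swap → P p) (base : ∀ c > 0, ∀ s ∈ Icc (-1 : ℝ) 1, P (c, s * c)) :
    ∀ p ≠ 0, P p := by
  have hpos : ∀ a b : ℝ, 0 < a → |b| ≤ a → P (a, b) := by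
    intro a b ha hb
    have := base a ha (b / a) (abs_le.mp (by rwa [abs_div, abs_of_pos ha, div_le_one ha]))
    rwa [div_mul_cancel₀ _ ha.ne'] at this
  have hle : ∀ a b : ℝ, a ≠ 0 → |b| ≤ |a| → P (a, b) := by
    intro a b ha hb
    rcases ha.lt_or_gt with h | h
    · exact neg _ (hpos (-a) (-b) (neg_pos.mpr h) (by rwa [abs_neg, ← abs_of_neg h]))
    · exact hpos a b h (by rwa [abs_of_pos h] at hb)
  rintro ⟨a, b⟩ hp
  rcases le_total |b| |a| with h | h
  · refine hle a b (fun ha => hp ?_) h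
    subst ha
    simp_all
  · refine swap _ (hle b a (fun hb => hp ?_) h)
    subst hb
    simp_all

section oval

variable {f : ℝ[X]} {k : ℕ} {u : ℕ → ℝ} {j : ℕ}

lemma swap_mem_oval {p : ℝ × ℝ} : p.swap ∈ oval f u j ↔ p ∈ oval f u j := by
  simp only [oval, mem_ofPred_eq, Prod.norm_def, Prod.fst_swap, Prod.snd_swap,
    eq_comm (a := f.eval p.2), max_comm ‖p.2‖, add_comm p.2]

lemma IsBarrier.neg_mem_oval (h : IsBarrier f k u) {p : ℝ × ℝ} :
    -p ∈ oval f u j ↔ p ∈ oval f u j := by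
  simp only [oval, mem_ofPred_eq, norm_neg, Prod.fst_neg, Prod.snd_neg, h.odd, neg_inj,
    ← neg_add, abs_neg]

lemma IsBarrier.diag_mem_oval_iff (h : IsBarrier f k u) {x : ℝ} :
    (x, x) ∈ oval f u j ↔ |x| = u j := by
  have hlt := h.strictMono j.lt_succ_self
  simp only [oval, mem_ofPred_eq, Prod.norm_mk, max_self, true_and, mem_Icc, Real.norm_eq_abs,
    ← two_mul, abs_mul, abs_two, Nat.succ_eq_add_one] at hlt ⊢
  constructor
  · rintro ⟨⟨h1, -⟩, h2⟩
    linarith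
  · intro hx
    rw [hx]
    exact ⟨⟨le_rfl, hlt.le⟩, by linarith⟩

/-- Off the diagonal, the last condition in the definition of `oval` is automatic. -/
lemma IsBarrier.mk_mem_oval (h : IsBarrier f k u) (hj : j < k) {c s : ℝ} (hc : 0 < c)
    (hs : s ∈ Ico (-1) 1) (hcI : c ∈ Icc (u j) (u (j + 1))) (hf : f.eval c = f.eval (s * c)) :
    (c, s * c) ∈ oval f u j := by
  have hu := h.pos j
  have hn := norm_mk_mul hc ⟨hs.1, hs.2.le⟩
  have hsc : s * c < c := mul_lt_of_lt_one_left hc hs.2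
  refine ⟨hf, by rwa [hn], ?_⟩
  rw [hn]
  refine abs_le.mpr ⟨by nlinarith [hs.1], ?_⟩
  by_contra! hcon
  simp only at hcon
  have := h.injOn j hj hcI ⟨by linarith, hsc.le.trans hcI.2⟩ hf
  linarith

lemma IsBarrier.existsUnique_mk_mem_oval (h : IsBarrier f k u) (hj : j < k) {s : ℝ}
    (hs : s ∈ Icc (-1) 1) : ∃! c, 0 < c ∧ (c, s * c) ∈ oval f u j := by
  rcases hs.2.eq_or_lt with rfl | hs'
  · have hu := h.pos j
    simp only [one_mul, h.diag_mem_oval_iff]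
    exact ⟨u j, ⟨hu, abs_of_pos hu⟩, fun c hc => by rw [← hc.2, abs_of_pos hc.1]⟩
  · obtain ⟨x, hx, hx'⟩ := h.exists_ray_zeros (by omega) hs.1 hs'
    have hxpos := (h.pos j).trans (hx j hj).1.1
    refine ⟨x j, ⟨hxpos, h.mk_mem_oval hj hxpos ⟨hs.1, hs'⟩ (Ioo_subset_Icc_self (hx j hj).1)
      (hx j hj).2⟩, ?_⟩
    rintro c ⟨hc, hcm⟩
    obtain ⟨i, hi, rfl⟩ := hx' c hc hcm.1
    have hn := hcm.2.1
    rw [norm_mk_mul hc hs] at hn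
    have h1 := h.strictMono.lt_iff_lt.mp ((hx i hi).1.1.trans_le hn.2)
    have h2 := h.strictMono.lt_iff_lt.mp (hn.1.trans_lt (hx i hi).1.2)
    rw [show i = j by omega]

/-- The set `oval f u j` is star-shaped. -/
lemma IsBarrier.existsUnique_smul_mem_oval (h : IsBarrier f k u) (hj : j < k) :
    ∀ v ≠ (0 : ℝ × ℝ), ∃! c : ℝ, 0 < c ∧ c • v ∈ oval f u j := by
  apply forall_ne_zero_of_symm
  · intro p
    simp only [smul_neg, h.neg_mem_oval, imp_self]
  · intro p
    simp only [← Prod.smul_swap, swap_mem_oval, imp_self]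
  · intro a ha s hs
    obtain ⟨c, ⟨hc, hcm⟩, huniq⟩ := h.existsUnique_mk_mem_oval hj hs
    have hsm : ∀ r : ℝ, r • (a, s * a) = (r * a, s * (r * a)) := by
      intro r
      simp only [Prod.smul_mk, smul_eq_mul, mul_left_comm]
    refine ⟨c / a, ⟨div_pos hc ha, ?_⟩, ?_⟩
    · rwa [hsm, div_mul_cancel₀ _ ha.ne']
    · rintro r ⟨hr, hrm⟩
      rw [hsm] at hrm
      rw [eq_div_iff ha.ne', huniq (r * a) ⟨mul_pos hr ha, hrm⟩]

lemma isCompact_oval (f : ℝ[X]) (u : ℕ → ℝ) (j : ℕ) : IsCompact (oval f u j) := by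
  apply Metric.isCompact_of_isClosed_isBounded
  · have h1 : Continuous fun p : ℝ × ℝ => f.eval p.1 := f.continuous.comp continuous_fst
    have h2 : Continuous fun p : ℝ × ℝ => f.eval p.2 := f.continuous.comp continuous_snd
    have h3 : IsClosed {p : ℝ × ℝ | |p.1 + p.2| ≤ ‖p‖ + u j} :=
      isClosed_le (by fun_prop) (by fun_prop)
    exact (isClosed_eq h1 h2).inter ((isClosed_Icc.preimage continuous_norm).inter h3)
  · exact (Metric.isBounded_closedBall (x := 0) (r := u (j + 1))).subset fun p hp =>
      mem_closedBall_zero_iff.mpr hp.2.1.2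

lemma IsBarrier.nonempty_oval_homeomorph_circle (h : IsBarrier f k u) (hj : j < k) :
    Nonempty (oval f u j ≃ₜ Circle) := by
  have hne : ∀ p ∈ oval f u j, Complex.equivRealProdCLM.symm p ≠ 0 := by
    intro p hp h0
    have hp0 : p = 0 := by simpa using h0
    have := (h.pos j).trans_le hp.2.1.1
    simp [hp0] at this
  let φ : oval f u j → Circle := fun p =>
    ⟨Complex.equivRealProdCLM.symm p.1 / ‖Complex.equivRealProdCLM.symm p.1‖, by
      have := norm_ne_zero_iff.mpr (hne p.1 p.2)
      simp [Submonoid.unitSphere, this]⟩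
  have hφ : Continuous φ := by
    refine Continuous.subtype_mk (Continuous.div (by fun_prop) (by fun_prop) fun p => ?_) _
    exact_mod_cast norm_ne_zero_iff.mpr (hne p.1 p.2)
  have hsmul : ∀ p : oval f u j, ‖Complex.equivRealProdCLM.symm p.1‖ •
      Complex.equivRealProdCLM (φ p : ℂ) = p.1 := by
    intro p
    have : (‖Complex.equivRealProdCLM.symm p.1‖ : ℂ) ≠ 0 := by
      exact_mod_cast norm_ne_zero_iff.mpr (hne p.1 p.2)
    rw [← map_smul, Complex.real_smul]
    simp only [φ]
    rw [mul_div_cancel₀ _ this, ContinuousLinearEquiv.apply_symm_apply]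
  have hv : ∀ z : Circle, Complex.equivRealProdCLM (z : ℂ) ≠ 0 := fun z h0 =>
    z.coe_ne_zero ((map_eq_zero_iff _ Complex.equivRealProdCLM.injective).mp h0)
  have hbij : Function.Bijective φ := by
    constructor
    · intro p q hpq
      have hp := hsmul p
      have hq := hsmul q
      rw [hpq] at hp
      have := (h.existsUnique_smul_mem_oval hj _ (hv (φ q))).unique
        ⟨norm_pos_iff.mpr (hne p.1 p.2), hp.symm ▸ p.2⟩
        ⟨norm_pos_iff.mpr (hne q.1 q.2), hq.symm ▸ q.2⟩
      rw [this] at hp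
      exact Subtype.ext (hp.symm.trans hq)
    · intro z
      obtain ⟨c, ⟨hc, hcm⟩, -⟩ := h.existsUnique_smul_mem_oval hj _ (hv z)
      refine ⟨⟨_, hcm⟩, Circle.ext ?_⟩
      have hc' : (c : ℂ) ≠ 0 := by exact_mod_cast hc.ne'
      simp only [φ]
      rw [map_smul, ContinuousLinearEquiv.symm_apply_apply, norm_smul, Circle.norm_coe, mul_one,
        Real.norm_of_nonneg hc.le, Complex.real_smul, mul_div_cancel_left₀ _ hc']
  have : CompactSpace (oval f u j) := isCompact_iff_compactSpace.mp (isCompact_oval f u j)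
  exact ⟨Continuous.homeoOfEquivCompactToT2 (f := Equiv.ofBijective φ hbij) hφ⟩

lemma IsBarrier.disjoint_oval (h : IsBarrier f k u) {i : ℕ} (hij : i < j) (hj : j ≤ k) :
    Disjoint (oval f u i) (oval f u j) := by
  rw [Set.disjoint_left]
  intro p
  by_cases hp0 : p = 0
  · intro hp
    have := (h.pos i).trans_le hp.2.1.1
    simp [hp0] at this
  refine forall_ne_zero_of_symm (P := fun p => p ∈ oval f u i → p ∉ oval f u j) ?_ ?_ ?_ p hp0
  · intro p
    simp only [h.neg_mem_oval, imp_self]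
  · intro p
    simp only [swap_mem_oval, imp_self]
  · intro c hc s hs hi hj'
    have hn := norm_mk_mul hc hs
    have hcj : c = u j := by
      have h1 := hi.2.1.2
      have h2 := hj'.2.1.1
      rw [hn] at h1 h2
      exact le_antisymm (h1.trans (h.strictMono.monotone hij)) h2
    have hlt := h.strictMono hij
    rcases (abs_le.mpr hs).eq_or_lt with hs1 | hs1
    · rcases (abs_eq zero_le_one).mp hs1 with rfl | rfl
      · rw [one_mul, h.diag_mem_oval_iff, abs_of_pos hc] at hi
        linarith
      · have h0 := h.abs_lt j hj 0 (by simpa using h.pos j)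
        have h1 := hi.1
        simp only [neg_one_mul, h.odd] at h1
        have h2 : f.eval (u j) = 0 := by rw [← hcj]; linarith
        rw [h2, abs_zero] at h0
        exact absurd h0 (abs_nonneg _).not_gt
    · have h0 := h.abs_lt j hj (s * c) (by
        rw [abs_mul, abs_of_pos hc, ← hcj]
        exact mul_lt_of_lt_one_left hc hs1)
      rw [← hcj, ← hi.1] at h0
      exact lt_irrefl _ h0

/-- Off the diagonal, the ovals cover `{f x = f y}`. -/
lemma IsBarrier.exists_mem_oval (h : IsBarrier f k u) (hk : 0 < k) {p : ℝ × ℝ}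
    (hp : p.1 ≠ p.2) (hf : f.eval p.1 = f.eval p.2) : ∃ j < k, p ∈ oval f u j := by
  have hp0 : p ≠ 0 := by
    rintro rfl
    exact hp rfl
  refine forall_ne_zero_of_symm (P := fun p => p.1 ≠ p.2 → f.eval p.1 = f.eval p.2 →
    ∃ j < k, p ∈ oval f u j) ?_ ?_ ?_ p hp0 hp hf
  · intro p hP hne heq
    simpa only [h.neg_mem_oval] using hP (by simpa using hne) (by simpa [h.odd] using heq)
  · intro p hP hne heq
    simpa only [swap_mem_oval] using hP hne.symm heq.symm
  · intro c hc s hs hne heq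
    have hs1 : s < 1 := hs.2.lt_of_ne (by rintro rfl; simp at hne)
    obtain ⟨x, hx, hx'⟩ := h.exists_ray_zeros hk hs.1 hs1
    obtain ⟨j, hj, rfl⟩ := hx' c hc heq
    exact ⟨j, hj, h.mk_mem_oval hj hc ⟨hs.1, hs1⟩ (Ioo_subset_Icc_self (hx j hj).1) heq⟩

end oval

lemma IsZeroEnum.rev_eq_neg {P : ℝ[X]} {m : ℕ} {z : Fin m → ℝ} (hz : IsZeroEnum P m z)
    (hP : ∀ x, P.eval x = 0 → P.eval (-x) = 0) (i : Fin m) : z i.rev = -z i := by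
  have hmono : StrictMono fun i : Fin m => -z i.rev := fun i j hij =>
    neg_lt_neg (hz.1 (Fin.rev_lt_rev.mpr hij))
  have hrange : range (fun i : Fin m => -z i.rev) = range z := by
    ext x
    constructor
    · rintro ⟨i, rfl⟩
      obtain ⟨l, hl⟩ := hz.2.2 _ (hP _ (hz.2.1 i.rev))
      exact ⟨l, hl.symm⟩
    · rintro ⟨i, rfl⟩
      obtain ⟨l, hl⟩ := hz.2.2 _ (hP _ (hz.2.1 i))
      exact ⟨l.rev, by simp [← hl]⟩
  have := congrFun ((hmono.range_inj hz.1).mp hrange) i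
  exact neg_eq_iff_eq_neg.mp this

/-- The barrier consists of the positive critical points of `H_{2k+1}`, followed by a point
beyond all zeros. -/
lemma exists_isBarrier_hermiteH {k : ℕ} (hk : 0 < k) {z : Fin (2 * k) → ℝ}
    (hz : IsZeroEnum (hermiteH (2 * k)) (2 * k) z) :
    ∃ u, IsBarrier (hermiteH (2 * k + 1)) k u ∧ ∀ x, (∃ i, x = z i) ↔ ∃ j < k, |x| = u j := by
  set f := hermiteH (2 * k + 1) with hf
  have hf' : ∀ x, (derivative f).eval x = 2 * ((2 * k : ℕ) + 1) * (hermiteH (2 * k)).eval x := by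
    intro x
    rw [hf, derivative_hermiteH_succ, eval_mul, eval_C]
  have hcrit : ∀ x, (derivative f).eval x = 0 ↔ ∃ i, x = z i := by
    intro x
    have hn : (2 * ((2 * k : ℕ) + 1) : ℝ) ≠ 0 := by positivity
    rw [hf', mul_eq_zero_iff_left hn]
    exact ⟨hz.2.2 x, by rintro ⟨i, rfl⟩; exact hz.2.1 i⟩
  have hodd : ∀ x, f.eval (-x) = -f.eval x := by
    intro x
    rw [hf, eval_neg_hermiteH, (odd_two_mul_add_one k).neg_one_pow, neg_one_mul]
  have hrev : ∀ i, z i.rev = -z i := hz.rev_eq_neg fun x hx => by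
    rw [eval_neg_hermiteH, hx, mul_zero]
  set a : ℝ := z ⟨2 * k - 1, by omega⟩ with ha
  obtain ⟨B, haB, hfB, hB'⟩ : ∃ B, a < B ∧ |f.eval a| < f.eval B ∧
      0 < (hermiteH (2 * k)).eval B :=
    ((Filter.eventually_gt_atTop a).and
      (((tendsto_hermiteH_atTop (2 * k).succ_pos).eventually_gt_atTop |f.eval a|).and
        ((tendsto_hermiteH_atTop (by omega)).eventually_gt_atTop 0))).exists
  let u : ℕ → ℝ := fun j => if h : j < k then z ⟨k + j, by omega⟩ else B + (j - k)
  have hu : ∀ j (h : j < k), u j = z ⟨k + j, by omega⟩ := fun j h => dif_pos h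
  have huk : u k = B := by simp [u]
  have hua : u (k - 1) = a := by
    rw [hu _ (by omega), ha]
    congr 2
    omega
  have hmono : StrictMono u := by
    refine strictMono_nat_of_lt_succ fun j => ?_
    rcases lt_trichotomy (j + 1) k with h | h | h
    · rw [hu j (by omega), hu _ h]
      exact hz.1 (Fin.mk_lt_mk.mpr (by omega))
    · rw [h, huk, show j = k - 1 by omega, hua]
      exact haB
    · simp only [u, dif_neg (show ¬ j < k by omega), dif_neg (show ¬ j + 1 < k by omega)]
      push_cast
      linarith
  have hpos : ∀ j, 0 < u j := by
    intro j
    refine lt_of_lt_of_le ?_ (hmono.monotone j.zero_le)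
    have h1 := hrev ⟨k, by omega⟩
    have h2 : z (Fin.rev ⟨k, by omega⟩) < z ⟨k, by omega⟩ := hz.1 (by
      rw [Fin.lt_def, Fin.val_rev]
      simp only
      omega)
    rw [hu 0 hk]
    simp only [add_zero]
    linarith
  have hnocrit : ∀ j < k, ∀ x ∈ Ioo (u j) (u (j + 1)), (derivative f).eval x ≠ 0 := by
    intro j hj x hx h0
    obtain ⟨i, rfl⟩ := (hcrit x).mp h0
    have h1 := hx.1
    have h2 := hx.2
    rw [hu j hj, hz.1.lt_iff_lt, Fin.lt_def] at h1
    simp only at h1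
    have hi := i.2
    rw [hu (j + 1) (by omega), hz.1.lt_iff_lt, Fin.lt_def] at h2
    simp only at h2
    omega
  have hinj : ∀ j < k, InjOn (fun x => f.eval x) (Icc (u j) (u (j + 1))) := by
    intro j hj
    have key : ∀ x ∈ Icc (u j) (u (j + 1)), ∀ y ∈ Icc (u j) (u (j + 1)), x < y →
        f.eval x ≠ f.eval y := by
      intro x hx y hy hxy heq
      obtain ⟨c, hc, hc'⟩ := exists_deriv_eq_zero hxy f.continuousOn heq
      rw [Polynomial.deriv] at hc'
      exact hnocrit j hj c ⟨hx.1.trans_lt hc.1, hc.2.trans_le hy.2⟩ hc'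
    intro x hx y hy heq
    by_contra hne
    rcases lt_or_gt_of_ne hne with h | h
    exacts [key x hx y hy h heq, key y hy x hx h heq.symm]
  have hmonoOn : ∀ j < k, StrictMonoOn (fun x => f.eval x) (Icc (u j) (u (j + 1))) ∨
      StrictAntiOn (fun x => f.eval x) (Icc (u j) (u (j + 1))) := fun j hj =>
    ContinuousOn.strictMonoOn_of_injOn_Icc' (hmono j.lt_succ_self).le f.continuousOn (hinj j hj)
  have hcritu : ∀ j < k, (derivative f).eval (u j) = 0 := fun j hj =>
    (hcrit _).mpr ⟨_, hu j hj⟩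
  refine ⟨u, ⟨hmono, hpos, natDegree_hermiteH_le _, hodd, ?_, ?_, hinj⟩, ?_⟩
  · intro j hj y hy
    rcases hj.lt_or_eq with hj | rfl
    · exact abs_eval_lt_of_derivative_eq_zero _ hy (hcritu j hj)
    rw [huk] at hy ⊢
    have habs : |f.eval y| = |f.eval (|y|)| := by
      rcases abs_choice y with h | h <;> rw [h]
      rw [hodd, abs_neg]
    have hfB' := hfB.trans_le (le_abs_self _)
    rcases lt_trichotomy |y| a with h | h | h
    · exact (abs_eval_lt_of_derivative_eq_zero _ h (hua ▸ hcritu _ (by omega))).trans hfB'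
    · rwa [habs, h]
    · have hm := hmonoOn (j - 1) (by omega)
      rw [show j - 1 + 1 = j by omega, hua, huk] at hm
      have hac : a ∈ Icc a B := ⟨le_rfl, haB.le⟩
      have hBc : B ∈ Icc a B := ⟨haB.le, le_rfl⟩
      have hyc : |y| ∈ Icc a B := ⟨h.le, hy.le⟩
      rcases hm with hm | hm
      · have h1 := hm hac hyc h
        have h2 := hm hyc hBc hy
        simp only at h1 h2
        rw [habs]
        refine lt_of_lt_of_le (abs_lt.mpr ⟨?_, h2⟩) (le_abs_self _)
        linarith [neg_abs_le (f.eval a)]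
      · have h1 := hm hac hBc haB
        simp only at h1
        linarith [le_abs_self (f.eval a)]
  · intro j hj
    have hlt := hmono j.lt_succ_self
    obtain ⟨c, hc, r, hr, hfc⟩ := exists_eval_eq_neg_mul (2 * k) hlt (hcritu j hj)
    rw [← hf] at hfc
    have hl : u j ∈ Icc (u j) (u (j + 1)) := ⟨le_rfl, hlt.le⟩
    have hr' : u (j + 1) ∈ Icc (u j) (u (j + 1)) := ⟨hlt.le, le_rfl⟩
    have hcc := Ioo_subset_Icc_self hc
    rcases Nat.lt_or_ge (j + 1) k with hj' | hj'
    · rw [hcritu _ hj', mul_zero] at hfc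
      rcases hmonoOn j hj with hm | hm
      · have h1 := hm hl hcc hc.1
        have h2 := hm hcc hr' hc.2
        simp only [hfc] at h1 h2
        exact mul_neg_of_neg_of_pos h1 h2
      · have h1 := hm hl hcc hc.1
        have h2 := hm hcc hr' hc.2
        simp only [hfc] at h1 h2
        exact mul_neg_of_pos_of_neg h1 h2
    · obtain rfl : j + 1 = k := by omega
      have hfc' : f.eval c < 0 := by
        rw [hfc, Nat.succ_eq_add_one, huk, hf']
        have := mul_pos hr (mul_pos (show (0 : ℝ) < 2 * ((2 * (j + 1) : ℕ) + 1) by positivity) hB')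
        linarith
      have hfu : 0 < f.eval (u (j + 1)) := by
        rw [huk]
        exact (abs_nonneg _).trans_lt hfB
      rcases hmonoOn j hj with hm | hm
      · exact mul_neg_of_neg_of_pos ((hm hl hcc hc.1).trans hfc') hfu
      · exact absurd ((hm hcc hr' hc.2).trans hfc') hfu.not_gt
  · intro x
    constructor
    · rintro ⟨i, rfl⟩
      rcases Nat.lt_or_ge i k with hi | hi
      · refine ⟨k - 1 - i, by omega, ?_⟩
        have h1 : u (k - 1 - i) = -z i := by
          rw [hu _ (by omega), ← hrev]
          congr 1
          ext
          rw [Fin.val_rev]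
          simp only
          omega
        rw [h1, abs_of_neg]
        linarith [hpos (k - 1 - i)]
      · refine ⟨i - k, by omega, ?_⟩
        have h1 : u (i - k) = z i := by
          rw [hu _ (by omega)]
          congr 1
          ext
          simp only
          omega
        rw [← h1, abs_of_pos (hpos _)]
    · rintro ⟨j, hj, hx⟩
      rcases abs_choice x with h | h <;> rw [h, hu j hj] at hx
      · exact ⟨_, hx⟩
      · exact ⟨_, by rw [hrev, ← hx, neg_neg]⟩

/-- For odd `n ≥ 3`, the zero set of `Ψ_n` is the union of the
diagonal and `(n-1)/2` pairwise disjoint simple closed curves; the union of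
these curves meets the diagonal exactly at the points `(t_{n-1,i}, t_{n-1,i})`
and the anti-diagonal exactly at the points `(t_{n,i}, -t_{n,i})` with
`t_{n,i} ≠ 0`. -/
theorem nodal_set_of_Psi_structure
    (n : ℕ) (hn3 : 3 ≤ n) (hodd : Odd n)
    (tz : Fin (n - 1) → ℝ) (htz : IsZeroEnum (hermiteH (n - 1)) (n - 1) tz)
    (tn : Fin n → ℝ) (htn : IsZeroEnum (hermiteH n) n tn) :
    ∃ Curves : Fin ((n - 1) / 2) → Set (ℝ × ℝ),
      (∀ m, Nonempty ((Curves m) ≃ₜ Circle)) ∧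
      (Pairwise fun m m' => Disjoint (Curves m) (Curves m')) ∧
      ({p : ℝ × ℝ | Psi n p = 0} = {p : ℝ × ℝ | p.1 = p.2} ∪ ⋃ m, Curves m) ∧
      ((⋃ m, Curves m) ∩ {p : ℝ × ℝ | p.1 = p.2}
        = {p : ℝ × ℝ | ∃ i, p = (tz i, tz i)}) ∧
      ((⋃ m, Curves m) ∩ {p : ℝ × ℝ | p.2 = -p.1}
        = {p : ℝ × ℝ | ∃ i, tn i ≠ 0 ∧ p = (tn i, -(tn i))}) := by
  obtain ⟨k, rfl⟩ := hodd
  have hk : 0 < k := by omega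
  obtain ⟨u, h, hu⟩ := exists_isBarrier_hermiteH hk htz
  have hlt : ∀ m : Fin ((2 * k + 1 - 1) / 2), m.1 < k := fun m => by omega
  have hmem : ∀ p, p ∈ (⋃ m : Fin ((2 * k + 1 - 1) / 2), oval (hermiteH (2 * k + 1)) u m) ↔
      ∃ j < k, p ∈ oval (hermiteH (2 * k + 1)) u j := by
    intro p
    rw [mem_iUnion]
    exact ⟨fun ⟨m, hm⟩ => ⟨m, hlt m, hm⟩, fun ⟨j, hj, hp⟩ => ⟨⟨j, by omega⟩, hp⟩⟩
  refine ⟨fun m => oval (hermiteH (2 * k + 1)) u m,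
    fun m => h.nonempty_oval_homeomorph_circle (hlt m), ?_, ?_, ?_, ?_⟩
  · intro m m' hne
    rcases lt_or_gt_of_ne hne with hmm | hmm
    · exact h.disjoint_oval hmm (hlt m').le
    · exact (h.disjoint_oval hmm (hlt m).le).symm
  · ext p
    rw [mem_union, hmem]
    simp only [mem_ofPred_eq, Psi, sub_eq_zero]
    constructor
    · intro hp
      by_cases hd : p.1 = p.2
      exacts [Or.inl hd, Or.inr (h.exists_mem_oval hk hd hp)]
    · rintro (hd | ⟨j, -, hp⟩)
      exacts [by rw [hd], hp.1]
  · ext ⟨x, y⟩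
    rw [mem_inter_iff, hmem]
    simp only [mem_ofPred_eq, Prod.mk.injEq]
    constructor
    · rintro ⟨⟨j, hj, hp⟩, rfl⟩
      obtain ⟨i, rfl⟩ := (hu x).mpr ⟨j, hj, h.diag_mem_oval_iff.mp hp⟩
      exact ⟨i, rfl, rfl⟩
    · rintro ⟨i, rfl, rfl⟩
      obtain ⟨j, hj, hx⟩ := (hu _).mp ⟨i, rfl⟩
      exact ⟨⟨j, hj, h.diag_mem_oval_iff.mpr hx⟩, rfl⟩
  · ext ⟨x, y⟩
    rw [mem_inter_iff, hmem]
    simp only [mem_ofPred_eq, Prod.mk.injEq]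
    constructor
    · rintro ⟨⟨j, hj, hp⟩, rfl⟩
      have h0 : (hermiteH (2 * k + 1)).eval x = 0 := by
        have := hp.1
        simp only [h.odd] at this
        linarith
      obtain ⟨i, rfl⟩ := htn.2.2 x h0
      refine ⟨i, fun hi => ?_, rfl, rfl⟩
      have := (h.pos j).trans_le hp.2.1.1
      simp [hi] at this
    · rintro ⟨i, hi, rfl, rfl⟩
      refine ⟨h.exists_mem_oval hk (fun heq => hi ?_) ?_, rfl⟩
      · simp only at heq
        linarith
      · simp only [h.odd, htn.2.1 i, neg_zero]
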